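/- The map b : G × 𝒞 → ℂ³, b(g, Y) = g·(Y + (0,0,i)), has image exactly ∂Ξ, and it separates H-orbits: for g, g′ ∈ G and Y, Y′ ∈ 𝒞 one has b(g, Y) = b(g′, Y′) if and only if the element h := g′⁻¹·g satisfies h·z₁ = z₁ (i.e. h ∈ H) and h·Y = Y′. (Hence b induces a G-equivariant bijection from G ×_H 𝒞 onto the full boundary ∂Ξ of the crown of SO_e(1,2)/SO(2).) -/

import Mathlib

open Matrix

/-- The Lorentz form `diag(1,-1,-1)`. -/
noncomputable def eta3 : Matrix (Fin 3) (Fin 3) ℝ := Matrix.diagonal ![1, -1, -1]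

/-- `G = SO_e(1,2)`: real `3×3` matrices preserving `diag(1,-1,-1)`, of determinant `1`,
with positive upper-left entry. -/
noncomputable def Gso : Set (Matrix (Fin 3) (Fin 3) ℝ) :=
  {g | gᵀ * eta3 * g = eta3 ∧ g.det = 1 ∧ 0 < g 0 0}

/-- Action of a real matrix on `ℂ³` by matrix multiplication. -/
noncomputable def act (g : Matrix (Fin 3) (Fin 3) ℝ) (z : Fin 3 → ℂ) : Fin 3 → ℂ :=
  (g.map (fun x : ℝ => (x : ℂ))).mulVec z

/-- `Q(z) = z₀² - z₁² - z₂²` on `ℂ³`. -/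
def Qc (z : Fin 3 → ℂ) : ℂ := z 0 ^ 2 - z 1 ^ 2 - z 2 ^ 2

/-- `Q(y) = y₀² - y₁² - y₂²` on `ℝ³`. -/
def Qr (y : Fin 3 → ℝ) : ℝ := y 0 ^ 2 - y 1 ^ 2 - y 2 ^ 2

/-- The semisimple boundary part `∂ₛΞ = {iy : y ∈ ℝ³, Q(y) = -1}`. -/
def bdS : Set (Fin 3 → ℂ) :=
  {z | ∃ y : Fin 3 → ℝ, (∀ j, z j = Complex.I * (y j : ℂ)) ∧ Qr y = -1}

/-- The nilpotent boundary part
`∂ₙΞ = {x + iy : Q(x+iy) = 1, x₀ > 0, Q(x) = 0}`. -/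
def bdN : Set (Fin 3 → ℂ) :=
  {z | Qc z = 1 ∧ 0 < (z 0).re ∧ Qr (fun j => (z j).re) = 0}

/-- The point `z₁ = (0,0,i)`. -/
noncomputable def z1pt : Fin 3 → ℂ := ![0, 0, Complex.I]

/-- The cone `𝒞 = ℝ₊·(1,1,0) ∪ ℝ₊·(1,-1,0)`. -/
def cone3 : Set (Fin 3 → ℝ) :=
  {Y | ∃ s : ℝ, 0 ≤ s ∧ (Y = ![s, s, 0] ∨ Y = ![s, -s, 0])}

/-- The map `b(g,Y) = g·(Y + (0,0,i))`. -/
noncomputable def bmap (g : Matrix (Fin 3) (Fin 3) ℝ) (Y : Fin 3 → ℝ) : Fin 3 → ℂ :=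
  act g (fun j => (Y j : ℂ) + z1pt j)


lemma aux_bmap (g : Matrix (Fin 3) (Fin 3) ℝ) (Y : Fin 3 → ℝ) (j : Fin 3) :
    bmap g Y j = ((g.mulVec Y j : ℝ) : ℂ) + Complex.I * ((g j 2 : ℝ) : ℂ) := by
  simp [bmap, act, z1pt, Matrix.mulVec, dotProduct, Fin.sum_univ_three]
  ring

lemma aux_bmap_eq (g g' : Matrix (Fin 3) (Fin 3) ℝ) (Y Y' : Fin 3 → ℝ) :
    bmap g Y = bmap g' Y' ↔
      g.mulVec Y = g'.mulVec Y' ∧ g.mulVec ![0, 0, 1] = g'.mulVec ![0, 0, 1] := by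
  have e : ∀ (g : Matrix (Fin 3) (Fin 3) ℝ) (j : Fin 3), g.mulVec ![0, 0, 1] j = g j 2 := by
    intro g j
    simp [Matrix.mulVec, dotProduct, Fin.sum_univ_three]
  constructor
  · intro h
    constructor
    · funext j
      have := congrArg Complex.re (congrFun h j)
      rw [aux_bmap, aux_bmap] at this
      simpa using this
    · funext j
      have := congrArg Complex.im (congrFun h j)
      rw [aux_bmap, aux_bmap] at this
      rw [e, e]
      simpa using this
  · rintro ⟨h1, h2⟩
    funext j
    have h2j := congrFun h2 j
    rw [e, e] at h2j
    rw [aux_bmap, aux_bmap, h1, h2j]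

lemma aux_act (g : Matrix (Fin 3) (Fin 3) ℝ) :
    act g z1pt = z1pt ↔ g.mulVec ![0, 0, 1] = ![0, 0, 1] := by
  have h := aux_bmap_eq g 1 0 0
  have e1 : ∀ g : Matrix (Fin 3) (Fin 3) ℝ, bmap g 0 = act g z1pt := by
    intro g; simp [bmap]
  have e2 : act 1 z1pt = z1pt := by
    simp [act]
  rw [e1, e1, e2] at h
  simpa using h

lemma aux_cols (g : Matrix (Fin 3) (Fin 3) ℝ) (h : gᵀ * eta3 * g = eta3) :
    (g 0 0 ^ 2 - g 1 0 ^ 2 - g 2 0 ^ 2 = 1) ∧ (g 0 1 ^ 2 - g 1 1 ^ 2 - g 2 1 ^ 2 = -1) ∧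
    (g 0 2 ^ 2 - g 1 2 ^ 2 - g 2 2 ^ 2 = -1) ∧
    (g 0 0 * g 0 1 - g 1 0 * g 1 1 - g 2 0 * g 2 1 = 0) ∧
    (g 0 0 * g 0 2 - g 1 0 * g 1 2 - g 2 0 * g 2 2 = 0) ∧
    (g 0 1 * g 0 2 - g 1 1 * g 1 2 - g 2 1 * g 2 2 = 0) := by
  have H : ∀ i j, (gᵀ * eta3 * g) i j = eta3 i j := fun i j => by rw [h]
  have h00 := H 0 0
  have h11 := H 1 1
  have h22 := H 2 2
  have h01 := H 0 1
  have h02 := H 0 2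
  have h12 := H 1 2
  simp [Matrix.mul_apply, Fin.sum_univ_three, eta3, Matrix.diagonal_apply] at h00 h11 h22 h01 h02 h12
  refine ⟨?_, ?_, ?_, ?_, ?_, ?_⟩ <;> linarith

lemma aux_row (g : Matrix (Fin 3) (Fin 3) ℝ) (h : gᵀ * eta3 * g = eta3) :
    g 0 0 ^ 2 - g 0 1 ^ 2 - g 0 2 ^ 2 = 1 := by
  have ee : eta3 * eta3 = 1 := by
    unfold eta3
    rw [Matrix.diagonal_mul_diagonal, ← Matrix.diagonal_one]
    congr 1
    funext i
    fin_cases i <;> simp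
  have h1 : (eta3 * gᵀ * eta3) * g = 1 := by
    have h4 : eta3 * (gᵀ * eta3 * g) = 1 := by rw [h, ee]
    simpa only [Matrix.mul_assoc] using h4
  have h2 := mul_eq_one_comm.mp h1
  have h3 := congrFun (congrFun h2 0) 0
  simp [Matrix.mul_apply, Fin.sum_univ_three, eta3, Matrix.diagonal_apply] at h3
  linarith

lemma aux_key (x y : Fin 3 → ℝ) (hx : Qr x = 0) (hx0 : 0 < x 0) (hy : Qr y = -1)
    (hxy : x 0 * y 0 - x 1 * y 1 - x 2 * y 2 = 0) :
    ∃ g ∈ Gso, (∀ j, g j 2 = y j) ∧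
      ((∀ j, g j 0 + g j 1 = x j) ∨ (∀ j, g j 0 - g j 1 = x j)) := by
  unfold Qr at hx hy
  obtain ⟨u, hu0, huu, hux, huy⟩ : ∃ u : Fin 3 → ℝ, 0 < u 0 ∧ u 0 ^ 2 - u 1 ^ 2 - u 2 ^ 2 = 1 ∧
      u 0 * x 0 - u 1 * x 1 - u 2 * x 2 = 1 ∧ u 0 * y 0 - u 1 * y 1 - u 2 * y 2 = 0 := by
    obtain ⟨a, ha⟩ : ∃ a : ℝ, a * x 0 = 1 := ⟨(x 0)⁻¹, inv_mul_cancel₀ hx0.ne'⟩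
    have ha0 : 0 < a := by
      by_contra hc
      nlinarith
    obtain ⟨b, hb⟩ : ∃ b : ℝ, b = (1 - a ^ 2 * (1 + y 0 ^ 2)) / 2 := ⟨_, rfl⟩
    refine ⟨![a * (1 + y 0 * y 0) + b * x 0, a * (y 0 * y 1) + b * x 1,
      a * (y 0 * y 2) + b * x 2], ?_, ?_, ?_, ?_⟩
    · have : a * (1 + y 0 * y 0) + b * x 0 = a * (1 + y 0 ^ 2) / 2 + x 0 / 2 := by
        rw [hb]
        linear_combination (-(a * (1 + y 0 ^ 2)) / 2) * ha
      simp only [Matrix.cons_val_zero]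
      rw [this]
      positivity
    · simp
      linear_combination (a ^ 2 * y 0 ^ 2) * hy + b ^ 2 * hx + 2 * a * b * y 0 * hxy + 2 * b * ha + 2 * hb
    · simp
      linear_combination b * hx + a * y 0 * hxy + ha
    · simp
      linear_combination a * y 0 * hy + b * hxy
  have key : ∀ e : ℝ, e ^ 2 = 1 → ∀ g : Matrix (Fin 3) (Fin 3) ℝ,
      g = !![u 0, e * (x 0 - u 0), y 0; u 1, e * (x 1 - u 1), y 1; u 2, e * (x 2 - u 2), y 2] →
      gᵀ * eta3 * g = eta3 := by
    intro e he g hg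
    ext i j
    fin_cases i <;> fin_cases j <;>
      simp [hg, Matrix.mul_apply, Fin.sum_univ_three, eta3, Matrix.diagonal_apply]
    · linear_combination huu
    · linear_combination e * (hux - huu)
    · linear_combination huy
    · linear_combination e * (hux - huu)
    · linear_combination e ^ 2 * (hx - 2 * hux + huu) - he
    · linear_combination e * (hxy - huy)
    · linear_combination huy
    · linear_combination e * (hxy - huy)
    · linear_combination hy
  obtain ⟨D, hD⟩ : ∃ D : ℝ, D = (!![u 0, 1 * (x 0 - u 0), y 0; u 1, 1 * (x 1 - u 1), y 1;
      u 2, 1 * (x 2 - u 2), y 2] : Matrix (Fin 3) (Fin 3) ℝ).det := ⟨_, rfl⟩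
  have hDD : D * D = 1 := by
    have h1 := congrArg Matrix.det (key 1 (by norm_num) _ rfl)
    rw [Matrix.det_mul, Matrix.det_mul, Matrix.det_transpose, ← hD] at h1
    simp [eta3, Matrix.det_diagonal, Fin.prod_univ_three] at h1
    exact h1
  rw [Matrix.det_fin_three] at hD
  simp at hD
  rcases mul_self_eq_one_iff.mp hDD with h | h
  · refine ⟨_, ⟨key 1 (by norm_num) _ rfl, ?_, by simpa using hu0⟩, ?_, Or.inl ?_⟩
    · rw [Matrix.det_fin_three]; simp; linarith
    · intro j; fin_cases j <;> simp
    · intro j; fin_cases j <;> simp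
  · refine ⟨_, ⟨key (-1) (by norm_num) _ rfl, ?_, by simpa using hu0⟩, ?_, Or.inr ?_⟩
    · rw [Matrix.det_fin_three]; simp; linarith
    · intro j; fin_cases j <;> simp
    · intro j; fin_cases j <;> simp

lemma aux_mem (g : Matrix (Fin 3) (Fin 3) ℝ) (hg : g ∈ Gso) (s e : ℝ) (hs : 0 ≤ s)
    (he : e ^ 2 = 1) : bmap g ![s, e * s, 0] ∈ bdS ∪ bdN := by
  obtain ⟨h, -, h0⟩ := hg
  obtain ⟨c00, c11, c22, c01, c02, c12⟩ := aux_cols g h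
  have r := aux_row g h
  have hm : ∀ j, g.mulVec ![s, e * s, 0] j = s * (g j 0 + e * g j 1) := by
    intro j
    simp [Matrix.mulVec, dotProduct, Fin.sum_univ_three]
    ring
  have hb : ∀ j, bmap g ![s, e * s, 0] j =
      ((s * (g j 0 + e * g j 1) : ℝ) : ℂ) + Complex.I * ((g j 2 : ℝ) : ℂ) := by
    intro j; rw [aux_bmap, hm]
  have hre : ∀ j, (bmap g ![s, e * s, 0] j).re = s * (g j 0 + e * g j 1) := by
    intro j; rw [hb]; simp
  have him : ∀ j, (bmap g ![s, e * s, 0] j).im = g j 2 := by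
    intro j; rw [hb]; simp
  rcases hs.eq_or_lt with h1 | h1
  · left
    refine ⟨fun j => g j 2, ?_, c22⟩
    intro j
    rw [hb, ← h1]; simp
  · right
    have hpos : 0 < g 0 0 + e * g 0 1 := by
      by_contra hc
      have h2 : (e * g 0 1) ^ 2 = g 0 1 ^ 2 := by rw [mul_pow, he, one_mul]
      nlinarith [sq_nonneg (g 0 2)]
    refine ⟨?_, ?_, ?_⟩
    · apply Complex.ext
      · simp only [Qc, pow_two, Complex.sub_re, Complex.mul_re, hre, him, Complex.one_re]
        linear_combination s ^ 2 * (c00 + e ^ 2 * c11 + 2 * e * c01) - c22 - s ^ 2 * he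
      · simp only [Qc, pow_two, Complex.sub_im, Complex.mul_im, hre, him, Complex.one_im]
        linear_combination 2 * s * (c02 + e * c12)
    · rw [hre]; positivity
    · simp only [Qr, hre]
      linear_combination s ^ 2 * (c00 + e ^ 2 * c11 + 2 * e * c01) - s ^ 2 * he

/-- the map `b : G × 𝒞 → ℂ³` has image exactly `∂Ξ = ∂ₛΞ ∪ ∂ₙΞ`, and it
separates `H`-orbits: `b(g,Y) = b(g',Y')` iff `h = g'⁻¹g` fixes `z₁` (so `h ∈ H`)
and `h·Y = Y'`. -/
theorem stmt_5 :
    ({z | ∃ g ∈ Gso, ∃ Y ∈ cone3, bmap g Y = z} = bdS ∪ bdN) ∧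
    (∀ g ∈ Gso, ∀ g' ∈ Gso, ∀ Y ∈ cone3, ∀ Y' ∈ cone3,
      (bmap g Y = bmap g' Y' ↔
        (act (g'⁻¹ * g) z1pt = z1pt ∧ (g'⁻¹ * g).mulVec Y = Y'))) := by
  constructor
  · ext z
    constructor
    · rintro ⟨g, hg, Y, ⟨s, hs, rfl | rfl⟩, rfl⟩
      · simpa using aux_mem g hg s 1 hs (by norm_num)
      · simpa using aux_mem g hg s (-1) hs (by norm_num)
    · rintro (⟨y, hz, hy⟩ | ⟨hQ, h0, hx⟩)
      · have hy' := hy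
        unfold Qr at hy'
        obtain ⟨g, hg, h2, -⟩ := aux_key
          ![1 + y 0 ^ 2, y 0 * y 1 - y 2, y 0 * y 2 + y 1] y
          (by simp [Qr]; linear_combination (1 + y 0 ^ 2) * hy') (by simp; positivity) hy
          (by simp; linear_combination y 0 * hy')
        refine ⟨g, hg, ![0, 0, 0], ⟨0, le_refl _, Or.inl rfl⟩, ?_⟩
        funext j
        rw [aux_bmap, h2, hz]
        simp [Matrix.mulVec, dotProduct, Fin.sum_univ_three]
      · have hQr := congrArg Complex.re hQ
        have hQi := congrArg Complex.im hQ
        have hx' := hx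
        simp only [Qc, pow_two, Complex.sub_re, Complex.mul_re, Complex.one_re] at hQr
        simp only [Qc, pow_two, Complex.sub_im, Complex.mul_im, Complex.one_im] at hQi
        unfold Qr at hx'
        obtain ⟨g, hg, h2, h3⟩ := aux_key (fun j => (z j).re) (fun j => (z j).im) hx h0
          (by simp only [Qr]; linear_combination hx' - hQr)
          (by linear_combination hQi / 2)
        rcases h3 with h3 | h3
        · refine ⟨g, hg, ![1, 1, 0], ⟨1, zero_le_one, Or.inl rfl⟩, ?_⟩
          funext j
          have : g.mulVec ![1, 1, 0] j = (z j).re := by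
            rw [← h3 j]; simp [Matrix.mulVec, dotProduct, Fin.sum_univ_three]
          rw [aux_bmap, this, h2]
          apply Complex.ext <;> simp
        · refine ⟨g, hg, ![1, -1, 0], ⟨1, zero_le_one, Or.inr rfl⟩, ?_⟩
          funext j
          have : g.mulVec ![1, -1, 0] j = (z j).re := by
            rw [← h3 j]; simp [Matrix.mulVec, dotProduct, Fin.sum_univ_three, sub_eq_add_neg]
          rw [aux_bmap, this, h2]
          apply Complex.ext <;> simp
  · intro g _ g' hg' Y _ Y' _
    have hu : IsUnit g'.det := by rw [hg'.2.1]; exact isUnit_one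
    have e : ∀ v w : Fin 3 → ℝ, g.mulVec v = g'.mulVec w ↔ (g'⁻¹ * g).mulVec v = w := by
      intro v w
      constructor
      · intro h
        rw [← Matrix.mulVec_mulVec, h, Matrix.mulVec_mulVec, Matrix.nonsing_inv_mul _ hu,
          Matrix.one_mulVec]
      · rintro rfl
        rw [Matrix.mulVec_mulVec, ← Matrix.mul_assoc, Matrix.mul_nonsing_inv _ hu, Matrix.one_mul]
    rw [aux_bmap_eq, aux_act, e, e, and_comm]
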